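/- arXiv:1003.4842 — 2 statements merged into one kernel-verified Lean document; each statement's English description precedes it below -/
import Mathlib

section
/- Let z₁, …, z_s (s ≥ 1) be distinct points of the unit circle S¹ ⊂ ℂ. For i = 1, 2 let βᵢ : S¹ \ {z₁,…,z_s} → ℝ be smooth, and assume that for each j = 1,…,s there is a smooth real function g_j^i defined on a neighborhood of 0 in ℝ with g_j^i(0) ≠ 0 such that βᵢ(z_j·e^{iθ}) = 1/(θ·g_j^i(θ)) for all θ ≠ 0 sufficiently close to 0. Assume moreover that sign(g_j^1(0)) = sign(g_j^2(0)) for every j. Then there exist smooth functions a, b : S¹ → ℝ with b everywhere positive such that a(z) = b(z)·β₂(z) − β₁(z) for every z ∈ S¹ \ {z₁,…,z_s}. -/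
open scoped Manifold Topology

lemma contDiffAt_log_im (x : ℂ) (hx : x ∈ Complex.slitPlane) :
    ContDiffAt ℝ (⊤ : ℕ∞) (fun w : ℂ => (Complex.log w).im) x := by
  have h1 : ContDiffAt ℝ (⊤ : ℕ∞) Complex.log x :=
    (Complex.contDiffAt_log (n := ((⊤ : ℕ∞) : WithTop ℕ∞)) hx).restrict_scalars ℝ
  exact Complex.imCLM.contDiff.contDiffAt.comp x h1

lemma contMDiff_circle_coe :
    ContMDiff (𝓡 1) 𝓘(ℝ, ℂ) (⊤ : ℕ∞) (fun w : Circle => (w : ℂ)) := by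
  have : Fact (Module.finrank ℝ ℂ = 1 + 1) := ⟨Complex.finrank_real_complex⟩
  exact contMDiff_coe_sphere

lemma arg_at (z u : Circle) (hu : ((z⁻¹ * u : Circle) : ℂ) ∈ Complex.slitPlane) : ContMDiffAt (𝓡 1) 𝓘(ℝ, ℝ) (⊤ : ℕ∞)
    (fun w : Circle => (Complex.log ((z⁻¹ * w : Circle) : ℂ)).im) u := by
  have h1 : ContMDiffAt (𝓡 1) 𝓘(ℝ, ℂ) (⊤ : ℕ∞)
      (fun w : Circle => ((z⁻¹ * w : Circle) : ℂ)) u := by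
    have h0 : ContMDiff (𝓡 1) (𝓡 1) (⊤ : ℕ∞) (fun w : Circle => z⁻¹ * w) :=
      contMDiff_const.mul contMDiff_id
    exact (contMDiff_circle_coe.comp h0).contMDiffAt
  have h2 := (contDiffAt_log_im ((z⁻¹ * u : Circle) : ℂ) hu).contMDiffAt
  exact ContMDiffAt.comp (g := fun w : ℂ => (Complex.log w).im)
    (f := fun w : Circle => ((z⁻¹ * w : Circle) : ℂ)) u h2 h1

lemma local_z (s : ℕ) (z : Fin s → Circle) (β : Fin 2 → Circle → ℝ)
    (g : Fin 2 → Fin s → ℝ → ℝ)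
    (hg : ∀ i j, ∃ ε > (0 : ℝ), ContDiffOn ℝ (⊤ : ℕ∞) (g i j) (Metric.ball (0 : ℝ) ε))
    (hg0 : ∀ i j, g i j 0 ≠ 0)
    (hmatch : ∀ i j, ∀ᶠ θ in 𝓝[≠] (0 : ℝ),
      β i (z j * Circle.exp θ) = 1 / (θ * g i j θ))
    (hsign : ∀ j, Real.sign (g 0 j 0) = Real.sign (g 1 j 0)) (j : Fin s) :
    ∃ b : Circle → ℝ, (∀ᶠ w in 𝓝 (z j), ContMDiffAt (𝓡 1) 𝓘(ℝ, ℝ) (⊤ : ℕ∞) b w) ∧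
      ∀ᶠ w in 𝓝 (z j), 0 < b w ∧ (w ∉ Set.range z → 0 = b w * β 1 w - β 0 w) := by
  have hga : ∀ i, ∀ᶠ θ in 𝓝 (0 : ℝ), ContDiffAt ℝ (⊤ : ℕ∞) (g i j) θ := by
    intro i
    obtain ⟨ε, hε, h⟩ := hg i j
    filter_upwards [Metric.ball_mem_nhds (0 : ℝ) hε] with θ hθ
    exact h.contDiffAt (Metric.isOpen_ball.mem_nhds hθ)
  have hgc : ∀ i, ContinuousAt (g i j) 0 := fun i => (hga i).self_of_nhds.continuousAt
  have hne : ∀ i, ∀ᶠ θ in 𝓝 (0 : ℝ), g i j θ ≠ 0 := fun i =>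
    (hgc i).eventually_ne (hg0 i j)
  have hpos0 : 0 < g 1 j 0 / g 0 j 0 := by
    have := hsign j
    rcases lt_or_gt_of_ne (hg0 0 j) with h | h <;> rcases lt_or_gt_of_ne (hg0 1 j) with h' | h'
    · exact div_pos_of_neg_of_neg h' h
    · rw [Real.sign_of_neg h, Real.sign_of_pos h'] at this; norm_num at this
    · rw [Real.sign_of_pos h, Real.sign_of_neg h'] at this; norm_num at this
    · exact div_pos h' h
  have hpos : ∀ᶠ θ in 𝓝 (0 : ℝ), 0 < g 1 j θ / g 0 j θ :=
    ((hgc 1).div (hgc 0) (hg0 0 j)).eventually (lt_mem_nhds hpos0)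
  have hm : ∀ i, ∀ᶠ θ in 𝓝 (0 : ℝ), θ ≠ 0 → β i (z j * Circle.exp θ) = 1 / (θ * g i j θ) :=
    fun i => eventually_nhdsWithin_iff.1 (hmatch i j)
  set T : Circle → ℝ := fun w => (Complex.log (((z j)⁻¹ * w : Circle) : ℂ)).im with hT
  have hTs := arg_at (z j) (z j) (by simp)
  have hTe : ∀ᶠ w in 𝓝 (z j), ContMDiffAt (𝓡 1) 𝓘(ℝ, ℝ) (⊤ : ℕ∞) T w := by
    have hc : Continuous (fun w : Circle => (((z j)⁻¹ * w : Circle) : ℂ)) := by fun_prop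
    have := (hc.continuousAt (x := z j)).eventually
      (Complex.isOpen_slitPlane.mem_nhds (by simp))
    filter_upwards [this] with w hw
    exact arg_at (z j) w hw
  have hT0 : T (z j) = 0 := by simp [hT]
  have hTt : Filter.Tendsto T (𝓝 (z j)) (𝓝 0) := by
    have := hTs.continuousAt.tendsto
    rwa [show (Complex.log (((z j)⁻¹ * z j : Circle) : ℂ)).im = 0 from hT0] at this
  have hexp : ∀ w, z j * Circle.exp (T w) = w := by
    intro w
    simp only [hT, Complex.log_im]
    rw [Circle.exp_arg, mul_inv_cancel_left]
  refine ⟨fun w => g 1 j (T w) / g 0 j (T w), ?_, ?_⟩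
  · filter_upwards [hTe, hTt.eventually (hga 0), hTt.eventually (hga 1), hTt.eventually (hne 0)]
      with w h1 h2 h3 h4
    have h5 : ContDiffAt ℝ (⊤ : ℕ∞) (fun θ => g 1 j θ / g 0 j θ) (T w) := h3.div h2 h4
    exact ContMDiffAt.comp w h5.contMDiffAt h1
  · filter_upwards [hTt.eventually hpos, hTt.eventually (hne 0), hTt.eventually (hne 1),
      hTt.eventually (hm 0), hTt.eventually (hm 1)] with w h1 h2 h3 h4 h5
    refine ⟨h1, fun hw => ?_⟩
    have hne0 : T w ≠ 0 := by
      intro h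
      apply hw
      refine ⟨j, ?_⟩
      have := hexp w
      rwa [h, Circle.exp_zero, mul_one] at this
    have e0 := h4 hne0
    have e1 := h5 hne0
    rw [hexp] at e0 e1
    rw [e0, e1]
    field_simp
    ring

/-- let `z 1, …, z s` (`s ≥ 1`) be distinct points of the circle, and for
`i = 1,2` let `βᵢ` be smooth on the complement of the `z j`'s, with
`βᵢ(z j · e^{iθ}) = 1/(θ·g_j^i(θ))` for `θ ≠ 0` near `0`, where `g_j^i` is smooth near `0`
with `g_j^i(0) ≠ 0`; if `sign (g_j^1 0) = sign (g_j^2 0)` for every `j`, then there are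
smooth `a, b : S¹ → ℝ` with `b > 0` everywhere such that `a = b·β₂ − β₁` off the `z j`'s. -/
theorem stmt_2 (s : ℕ) (hs : 1 ≤ s) (z : Fin s → Circle) (hz : Function.Injective z)
    (β : Fin 2 → Circle → ℝ)
    (hβ : ∀ i, ContMDiffOn (𝓡 1) 𝓘(ℝ, ℝ) (⊤ : ℕ∞) (β i) (Set.range z)ᶜ)
    (g : Fin 2 → Fin s → ℝ → ℝ)
    (hg : ∀ i j, ∃ ε > (0 : ℝ), ContDiffOn ℝ (⊤ : ℕ∞) (g i j) (Metric.ball (0 : ℝ) ε))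
    (hg0 : ∀ i j, g i j 0 ≠ 0)
    (hmatch : ∀ i j, ∀ᶠ θ in 𝓝[≠] (0 : ℝ),
      β i (z j * Circle.exp θ) = 1 / (θ * g i j θ))
    (hsign : ∀ j, Real.sign (g 0 j 0) = Real.sign (g 1 j 0)) :
    ∃ a b : Circle → ℝ,
      ContMDiff (𝓡 1) 𝓘(ℝ, ℝ) (⊤ : ℕ∞) a ∧ ContMDiff (𝓡 1) 𝓘(ℝ, ℝ) (⊤ : ℕ∞) b ∧
      (∀ w : Circle, 0 < b w) ∧
      ∀ w : Circle, w ∉ Set.range z → a w = b w * β 1 w - β 0 w := by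
  classical
  let t : Circle → Set (ℝ × ℝ) := fun w =>
    {p | 0 < p.2 ∧ (w ∉ Set.range z → p.1 = p.2 * β 1 w - β 0 w)}
  have ht : ∀ w, Convex ℝ (t w) := by
    rintro w ⟨a, b⟩ ⟨h1, h2⟩ ⟨a', b'⟩ ⟨h1', h2'⟩ c d hc hd hcd
    refine ⟨?_, fun hw => ?_⟩
    · exact (convex_Ioi (0 : ℝ)) h1 h1' hc hd hcd
    · have e1 := h2 hw
      have e2 := h2' hw
      simp only [Prod.smul_mk, Prod.mk_add_mk, smul_eq_mul] at e1 e2 ⊢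
      rw [e1, e2]
      linear_combination (-β 0 w) * hcd
  have hopen : IsOpen (Set.range z)ᶜ := (Set.finite_range z).isClosed.isOpen_compl
  have hloc : ∀ w : Circle, ∃ U ∈ 𝓝 w, ∃ f : Circle → ℝ × ℝ,
      ContMDiffOn (𝓡 1) 𝓘(ℝ, ℝ × ℝ) (⊤ : ℕ∞) f U ∧ ∀ y ∈ U, f y ∈ t y := by
    intro w
    by_cases hw : w ∈ Set.range z
    · obtain ⟨j, rfl⟩ := hw
      obtain ⟨b, hb1, hb2⟩ := local_z s z β g hg hg0 hmatch hsign j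
      refine ⟨_, hb1.and hb2, fun w => (0, b w), ?_, ?_⟩
      · intro y hy
        exact (contMDiffAt_const.prodMk_space hy.1).contMDiffWithinAt
      · intro y hy
        exact hy.2
    · refine ⟨_, hopen.mem_nhds hw, fun w => (β 1 w - β 0 w, 1), ?_, ?_⟩
      · exact ((hβ 1).sub (hβ 0)).prodMk_space contMDiffOn_const
      · intro y hy
        exact ⟨one_pos, fun _ => (by simp)⟩
  obtain ⟨f, hf⟩ := exists_contMDiffMap_forall_mem_convex_of_local (𝓡 1) ht hloc
  have hfs := f.contMDiff
  refine ⟨fun w => (f w).1, fun w => (f w).2, ?_, ?_, fun w => (hf w).1, fun w hw => (hf w).2 hw⟩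
  · exact (contDiff_fst (𝕜 := ℝ) (E := ℝ) (F := ℝ)).contMDiff.comp hfs
  · exact (contDiff_snd (𝕜 := ℝ) (E := ℝ) (F := ℝ)).contMDiff.comp hfs
end

section
/- Let U ⊆ ℝ² be an open set containing (0,0), let a : ℝ → ℝ and ā₂, b̄₂ : U → ℝ be smooth. For the smooth vector fields G₁(x,y) = (1, x·a(x) + y·ā₂(x,y)) and G₂(x,y) = (0, y·b̄₂(x,y)) on U, the Lie bracket satisfies [G₁, G₂](x, 0) = (0, x·a(x)·b̄₂(x, 0)) for every x with (x,0) ∈ U, and the iterated bracket satisfies [G₁, [G₁, G₂]](0, 0) = (0, a(0)·b̄₂(0, 0)). -/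
/-- for the vector fields `G₁(x,y) = (1, x·a(x) + y·ā₂(x,y))` and
`G₂(x,y) = (0, y·b̄₂(x,y))` on an open `U ⊆ ℝ²` containing the origin, with `a` smooth on `ℝ`
and `ā₂, b̄₂` smooth on `U`, the Lie bracket (computed as `[V,W](p) = DW(p)·V(p) − DV(p)·W(p)`)
satisfies `[G₁,G₂](x,0) = (0, x·a(x)·b̄₂(x,0))` for every `x` with `(x,0) ∈ U`, and the
iterated bracket satisfies `[G₁,[G₁,G₂]](0,0) = (0, a(0)·b̄₂(0,0))`. -/
theorem stmt_6 (U : Set (ℝ × ℝ)) (hU : IsOpen U) (h0 : ((0 : ℝ), (0 : ℝ)) ∈ U)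
    (a : ℝ → ℝ) (a₂ b₂ : ℝ × ℝ → ℝ)
    (ha : ContDiff ℝ (⊤ : ℕ∞) a)
    (ha₂ : ContDiffOn ℝ (⊤ : ℕ∞) a₂ U) (hb₂ : ContDiffOn ℝ (⊤ : ℕ∞) b₂ U)
    (G₁ G₂ B : ℝ × ℝ → ℝ × ℝ)
    (hG₁ : ∀ p, G₁ p = (1, p.1 * a p.1 + p.2 * a₂ p))
    (hG₂ : ∀ p, G₂ p = (0, p.2 * b₂ p))
    (hB : ∀ p, B p = fderiv ℝ G₂ p (G₁ p) - fderiv ℝ G₁ p (G₂ p)) :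
    (∀ x : ℝ, (x, (0 : ℝ)) ∈ U → B (x, 0) = ((0 : ℝ), x * a x * b₂ (x, 0))) ∧
    fderiv ℝ B (0, 0) (G₁ (0, 0)) - fderiv ℝ G₁ (0, 0) (B (0, 0))
      = ((0 : ℝ), a 0 * b₂ (0, 0)) := by
  have part1 : ∀ x : ℝ, (x, (0 : ℝ)) ∈ U → B (x, 0) = ((0 : ℝ), x * a x * b₂ (x, 0)) := by
    intro x hx
    have hb : DifferentiableAt ℝ b₂ (x, 0) :=
      (hb₂.contDiffAt (hU.mem_nhds hx)).differentiableAt (by simp)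
    have hd := ((hasFDerivAt_const (𝕜 := ℝ) (0 : ℝ) (x, (0 : ℝ))).prodMk
        ((hasFDerivAt_snd (𝕜 := ℝ) (p := (x, (0 : ℝ)))).mul hb.hasFDerivAt)).congr_of_eventuallyEq
        (f₁ := G₂) (Filter.Eventually.of_forall hG₂)
    have hz : G₂ (x, 0) = 0 := by rw [hG₂]; simp
    rw [hB, hz, map_zero, sub_zero, hd.fderiv, hG₁]
    simp
    ring
  refine ⟨part1, ?_⟩
  have hB0 : B (0, 0) = 0 := by rw [part1 0 h0]; simp
  have hn := hU.mem_nhds h0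
  have hca := ha₂.contDiffAt hn
  have hcb := hb₂.contDiffAt hn
  have hc1 : ContDiffAt ℝ (⊤ : ℕ∞) G₁ (0, 0) := by
    rw [show G₁ = _ from funext hG₁]
    fun_prop
  have hc2 : ContDiffAt ℝ (⊤ : ℕ∞) G₂ (0, 0) := by
    rw [show G₂ = _ from funext hG₂]
    fun_prop
  have hBd : DifferentiableAt ℝ B (0, 0) := by
    have e1 : DifferentiableAt ℝ (fderiv ℝ G₁) (0, 0) :=
      (hc1.fderiv_right (m := 1) (by norm_cast)).differentiableAt (by simp)
    have e2 : DifferentiableAt ℝ (fderiv ℝ G₂) (0, 0) :=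
      (hc2.fderiv_right (m := 1) (by norm_cast)).differentiableAt (by simp)
    rw [show B = _ from funext hB]
    exact (e2.clm_apply (hc1.differentiableAt (by simp))).sub
      (e1.clm_apply (hc2.differentiableAt (by simp)))
  have hι : HasDerivAt (fun t : ℝ => (t, (0 : ℝ))) (1, 0) 0 :=
    (hasDerivAt_id (0 : ℝ)).prodMk (hasDerivAt_const _ _)
  have h1 : HasDerivAt (fun t : ℝ => B (t, 0)) (fderiv ℝ B (0, 0) (1, 0)) 0 :=
    HasFDerivAt.comp_hasDerivAt (x := (0 : ℝ)) (f := fun t : ℝ => (t, (0 : ℝ))) hBd.hasFDerivAt hι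
  have hbx : DifferentiableAt ℝ (fun t : ℝ => b₂ (t, 0)) 0 :=
    (HasFDerivAt.comp_hasDerivAt (x := (0 : ℝ)) (f := fun t : ℝ => (t, (0 : ℝ)))
      (hcb.differentiableAt (by simp)).hasFDerivAt hι).differentiableAt
  have had : DifferentiableAt ℝ a 0 := ha.contDiffAt.differentiableAt (by simp)
  have h2 :=
    (hasDerivAt_const (0 : ℝ) (0 : ℝ)).prodMk
      (((hasDerivAt_id (0 : ℝ)).mul had.hasDerivAt).mul hbx.hasDerivAt)
  have hev : (fun t : ℝ => B (t, 0)) =ᶠ[nhds 0] fun t : ℝ => ((0 : ℝ), t * a t * b₂ (t, 0)) := by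
    have := hι.continuousAt.preimage_mem_nhds hn
    filter_upwards [this] with t ht using part1 t ht
  have h3 := h1.unique (h2.congr_of_eventuallyEq (f₁ := fun t : ℝ => B (t, 0)) hev)
  have hg : G₁ (0, 0) = (1, 0) := by rw [hG₁]; simp
  rw [hB0, map_zero, sub_zero, hg, h3]
  simp
end
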